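/- arXiv:1912.05562 — 2 statements merged into one kernel-verified Lean document; each statement's English description precedes it below -/
import Mathlib

section
/- Reduction to binary distributions for multiplicative convex/concave functions (Lemma): Let g : [0,∞) → ℝ be nonnegative and multiplicative, i.e. g(xy) = g(x)g(y) for all x,y ≥ 0 and g(1) = 1, with g(1/2) > 0, and for a probability vector p ∈ ℝ^d set f_g(p) := Σ_{i=1}^d g(p_i). Let d ≥ 2, δ ∈ [0,2], and let p ∈ ℝ^d be a probability vector with ‖p − u_d‖₁ ≥ δ, and write p₂^δ := ((1+δ/2)/2, (1−δ/2)/2). If g is convex on [0,∞), then f_g(p) − f_g(u_d) ≥ (f_g(u_d)/f_g(u_2))·( f_g(p₂^δ) − f_g(u_2) ). If instead g is concave on [0,∞) (with the other assumptions unchanged), then f_g(u_d) − f_g(p) ≥ (f_g(u_d)/f_g(u_2))·( f_g(u_2) − f_g(p₂^δ) ). -/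
/-- A probability vector: nonnegative entries summing to one. -/
def IsProbVec {d : ℕ} (p : Fin d → ℝ) : Prop :=
  (∀ i, 0 ≤ p i) ∧ ∑ i, p i = 1

/-- ℓ¹ distance between two vectors. -/
def l1Dist {d : ℕ} (p q : Fin d → ℝ) : ℝ :=
  ∑ i, |p i - q i|

/-- The uniform probability vector on `d` outcomes. -/
noncomputable def unif (d : ℕ) : Fin d → ℝ := fun _ => 1 / d

/-- The smoothed vector `q̃(ε)`: the uniform vector if `q` is `ε`-close to uniform in ℓ¹,
otherwise the mixture `(1−ε)q + ε·u_d`. -/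
noncomputable def smoothed {d : ℕ} (q : Fin d → ℝ) (ε : ℝ) : Fin d → ℝ :=
  if l1Dist q (unif d) < ε then unif d else fun i => (1 - ε) * q i + ε * (1 / d)

/-- Rényi entropy `S_α(p) = (1/(1−α)) ln Σᵢ pᵢ^α` (real powers, `0^α = 0` for `α > 0`). -/
noncomputable def renyiEntropy (α : ℝ) {d : ℕ} (p : Fin d → ℝ) : ℝ :=
  (1 - α)⁻¹ * Real.log (∑ i, p i ^ α)

/-- Shannon entropy `S₁(p) = −Σᵢ pᵢ ln pᵢ` (with `0 ln 0 = 0`). -/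
noncomputable def shannonEntropy {d : ℕ} (p : Fin d → ℝ) : ℝ :=
  -∑ i, p i * Real.log (p i)

/-- Min-entropy `S_∞(p) = −ln maxᵢ pᵢ`. -/
noncomputable def minEntropy {d : ℕ} (p : Fin d → ℝ) : ℝ :=
  -Real.log (⨆ i, p i)

/-- Tsallis entropy: `T_α(p) = (1 − Σᵢ pᵢ^α)/(α−1)` for `α ≠ 1`, Shannon entropy at `α = 1`. -/
noncomputable def tsallisEntropy (α : ℝ) {d : ℕ} (p : Fin d → ℝ) : ℝ :=
  if α = 1 then shannonEntropy p else (1 - ∑ i, p i ^ α) / (α - 1)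

/-!
Clip `p` at its mean `1/d`. The vectors `max(p, 1/d)` and `min(p, 1/d)` have averages
`(1 ± ‖p − u_d‖₁/2)/d`, and together they take exactly the values of `p` and of `u_d`. For every
convex `f`, Jensen's inequality for the two clipped vectors therefore gives
`∑ f(pᵢ) + d·f(1/d) ≥ d·(f((1 + δ/2)/d) + f((1 − δ/2)/d))`, because `f(m + r) + f(m − r)` grows
with `|r|`. Multiplicativity only serves to move the right-hand side from scale `1/d` to scale
`1/2`. The resulting lower bound is twice the claimed one, and the binary difference is nonnegative.
-/

lemma convexOn_map_add_map_le_of_mem_segment {E : Type*} [AddCommGroup E] [Module ℝ E] {s : Set E}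
    {f : E → ℝ} {u v x y : E} (hf : ConvexOn ℝ s f) (hu : u ∈ s) (hv : v ∈ s)
    (hx : x ∈ segment ℝ u v) (hxy : x + y = u + v) : f x + f y ≤ f u + f v := by
  obtain ⟨a, b, ha, hb, hab, rfl⟩ := hx
  have hy : y = b • u + a • v := by
    rw [eq_sub_of_add_eq' hxy, eq_sub_of_add_eq hab]
    module
  have hfx := hf.2 hu hv ha hb hab
  have hfy := hf.2 hu hv hb ha (add_comm b a ▸ hab)
  rw [← hy] at hfy
  simp only [smul_eq_mul] at hfx hfy
  linear_combination hfx + hfy + (f u + f v) * hab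

lemma convexOn_two_mul_map_one_div_le {f : ℝ → ℝ} (hf : ConvexOn ℝ (Set.Ici 0) f) {r c : ℝ}
    (hr : |r| ≤ 1) (hc : 0 ≤ c) : 2 * f (1 / c) ≤ f ((1 + r) / c) + f ((1 - r) / c) := by
  have hadd : 0 ≤ (1 + r) / c := div_nonneg (by linarith [neg_le_of_abs_le hr]) hc
  have hsub : 0 ≤ (1 - r) / c := div_nonneg (by linarith [le_of_abs_le hr]) hc
  have hmid : 1 / c ∈ segment ℝ ((1 + r) / c) ((1 - r) / c) :=
    ⟨1 / 2, 1 / 2, by norm_num, by norm_num, by norm_num, by simp only [smul_eq_mul]; ring⟩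
  rw [two_mul]
  exact convexOn_map_add_map_le_of_mem_segment hf hadd hsub hmid (by ring)

lemma concaveOn_le_two_mul_map_one_div {f : ℝ → ℝ} (hf : ConcaveOn ℝ (Set.Ici 0) f) {r c : ℝ}
    (hr : |r| ≤ 1) (hc : 0 ≤ c) : f ((1 + r) / c) + f ((1 - r) / c) ≤ 2 * f (1 / c) := by
  have hneg := convexOn_two_mul_map_one_div_le hf.neg hr hc
  simp only [Pi.neg_apply] at hneg
  linarith

section ClippingAtTheMean

variable {ι : Type*} {t : Finset ι} {w x : ι → ℝ} {m : ℝ}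

lemma sum_mul_max_mean (hw : ∑ i ∈ t, w i = 1) (hm : ∑ i ∈ t, w i * x i = m) :
    ∑ i ∈ t, w i * max (x i) m = m + (∑ i ∈ t, w i * |x i - m|) / 2 := by
  calc ∑ i ∈ t, w i * max (x i) m
      = ∑ i ∈ t, (w i * x i / 2 + w i * m / 2 + w i * |x i - m| / 2) := by
        refine Finset.sum_congr rfl fun i _ ↦ ?_
        rw [abs_sub_comm, ← max_sub_min_eq_abs]
        linear_combination w i / 2 * min_add_max (x i) m
    _ = m + (∑ i ∈ t, w i * |x i - m|) / 2 := by
        simp only [Finset.sum_add_distrib, ← Finset.sum_div, ← Finset.sum_mul, hw, hm]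
        ring

lemma sum_mul_min_mean (hw : ∑ i ∈ t, w i = 1) (hm : ∑ i ∈ t, w i * x i = m) :
    ∑ i ∈ t, w i * min (x i) m = m - (∑ i ∈ t, w i * |x i - m|) / 2 := by
  have hsum : ∑ i ∈ t, w i * min (x i) m + ∑ i ∈ t, w i * max (x i) m = m + m := by
    simp only [← Finset.sum_add_distrib, ← mul_add, min_add_max]
    simp only [mul_add, Finset.sum_add_distrib, ← Finset.sum_mul, hw, hm, one_mul]
  linarith [sum_mul_max_mean hw hm]

lemma convexOn_map_mean_add_add_map_mean_sub_le {s : Set ℝ} {f : ℝ → ℝ} {r : ℝ}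
    (hf : ConvexOn ℝ s f) (hw₀ : ∀ i ∈ t, 0 ≤ w i) (hw₁ : ∑ i ∈ t, w i = 1)
    (hx : ∀ i ∈ t, x i ∈ s) (hm : ∑ i ∈ t, w i * x i = m)
    (hr : |r| ≤ (∑ i ∈ t, w i * |x i - m|) / 2) :
    f (m + r) + f (m - r) ≤ ∑ i ∈ t, w i * f (x i) + f m := by
  have hms : m ∈ s := hm ▸ hf.1.sum_mem hw₀ hw₁ hx
  have hmax : ∀ i ∈ t, max (x i) m ∈ s := fun i hi ↦ max_rec' s (hx i hi) hms
  have hmin : ∀ i ∈ t, min (x i) m ∈ s := fun i hi ↦ min_rec' s (hx i hi) hms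
  set R := (∑ i ∈ t, w i * |x i - m|) / 2
  have hmax_mean : ∑ i ∈ t, w i • max (x i) m = m + R := sum_mul_max_mean hw₁ hm
  have hmin_mean : ∑ i ∈ t, w i • min (x i) m = m - R := sum_mul_min_mean hw₁ hm
  have hsegment : m + r ∈ segment ℝ (m - R) (m + R) :=
    Icc_subset_segment ⟨by linarith [neg_le_of_abs_le hr], by linarith [le_of_abs_le hr]⟩
  calc f (m + r) + f (m - r)
      ≤ f (m - R) + f (m + R) :=
        convexOn_map_add_map_le_of_mem_segment hf (hmin_mean ▸ hf.1.sum_mem hw₀ hw₁ hmin)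
          (hmax_mean ▸ hf.1.sum_mem hw₀ hw₁ hmax) hsegment (by ring)
    _ ≤ ∑ i ∈ t, w i * f (min (x i) m) + ∑ i ∈ t, w i * f (max (x i) m) := by
        rw [← hmax_mean, ← hmin_mean]
        exact add_le_add (hf.map_sum_le hw₀ hw₁ hmin) (hf.map_sum_le hw₀ hw₁ hmax)
    _ = ∑ i ∈ t, w i * f (x i) + f m := by
        simp only [← Finset.sum_add_distrib, ← mul_add, fn_min_add_fn_max]
        simp only [mul_add, Finset.sum_add_distrib, ← Finset.sum_mul, hw₁, one_mul]

end ClippingAtTheMean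

lemma isProbVec_unif {d : ℕ} (hd : d ≠ 0) : IsProbVec (unif d) :=
  ⟨fun _ ↦ one_div_nonneg.mpr d.cast_nonneg, by simp [unif, hd]⟩

namespace IsProbVec

variable {d : ℕ} {p q : Fin d → ℝ} {f : ℝ → ℝ} {δ : ℝ}

lemma dim_ne_zero (hp : IsProbVec p) : d ≠ 0 := by
  rintro rfl
  simpa using hp.2

lemma l1Dist_le_two (hp : IsProbVec p) (hq : IsProbVec q) : l1Dist p q ≤ 2 :=
  calc ∑ i, |p i - q i|
      ≤ ∑ i, (p i + q i) := Finset.sum_le_sum fun i _ ↦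
        abs_sub_le_iff.mpr ⟨by linarith [hq.1 i], by linarith [hp.1 i]⟩
    _ = 2 := by rw [Finset.sum_add_distrib, hp.2, hq.2, one_add_one_eq_two]

lemma le_sum_sub_of_convexOn (hp : IsProbVec p) (hf : ConvexOn ℝ (Set.Ici 0) f)
    (hdist : |δ| ≤ l1Dist p (unif d)) :
    d * (f ((1 + δ / 2) / d) + f ((1 - δ / 2) / d) - 2 * f (1 / d)) ≤
      ∑ i, f (p i) - d * f (1 / d) := by
  have hd : (0 : ℝ) < d := by exact_mod_cast hp.dim_ne_zero.bot_lt
  have hmean : ∑ i, 1 / (d : ℝ) * p i = 1 / d := by rw [← Finset.mul_sum, hp.2, mul_one]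
  have hradius : |δ / 2 / d| ≤ (∑ i, 1 / (d : ℝ) * |p i - 1 / d|) / 2 :=
    calc |δ / 2 / d| = 1 / d * |δ| / 2 := by
          rw [abs_div, abs_div, abs_two, abs_of_pos hd]
          ring
      _ ≤ 1 / d * l1Dist p (unif d) / 2 := by gcongr
      _ = (∑ i, 1 / (d : ℝ) * |p i - 1 / d|) / 2 := by simp only [l1Dist, unif, Finset.mul_sum]
  have hclip : f ((1 + δ / 2) / d) + f ((1 - δ / 2) / d) ≤ 1 / d * ∑ i, f (p i) + f (1 / d) := by
    rw [add_div, sub_div, Finset.mul_sum]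
    exact convexOn_map_mean_add_add_map_mean_sub_le hf (fun _ _ ↦ by positivity)
      (by simp [hd.ne']) (fun i _ ↦ hp.1 i) hmean hradius
  calc d * (f ((1 + δ / 2) / d) + f ((1 - δ / 2) / d) - 2 * f (1 / d))
      ≤ d * (1 / d * ∑ i, f (p i) + f (1 / d) - 2 * f (1 / d)) := by gcongr
    _ = ∑ i, f (p i) - d * f (1 / d) := by field_simp; ring

lemma le_sub_sum_of_concaveOn (hp : IsProbVec p) (hf : ConcaveOn ℝ (Set.Ici 0) f)
    (hdist : |δ| ≤ l1Dist p (unif d)) :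
    d * (2 * f (1 / d) - (f ((1 + δ / 2) / d) + f ((1 - δ / 2) / d))) ≤
      d * f (1 / d) - ∑ i, f (p i) := by
  have hneg := hp.le_sum_sub_of_convexOn hf.neg hdist
  simp only [Pi.neg_apply, Finset.sum_neg_distrib] at hneg
  linarith

end IsProbVec

lemma map_div_eq_map_one_div_div_mul {g : ℝ → ℝ}
    (hmul : ∀ x y : ℝ, 0 ≤ x → 0 ≤ y → g (x * y) = g x * g y) {a b c : ℝ}
    (ha : 0 ≤ a) (hb : 0 ≤ b) (hc : 0 ≤ c) (hgc : g (1 / c) ≠ 0) :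
    g (a / b) = g (1 / b) / g (1 / c) * g (a / c) := by
  have hscale {c : ℝ} (hc : 0 ≤ c) : g (a / c) = g (1 / c) * g a := by
    rw [← hmul _ _ (one_div_nonneg.mpr hc) ha, one_div_mul_eq_div]
  rw [hscale hb, hscale hc]
  field_simp

theorem binary_reduction_multiplicative_general {d : ℕ} {g : ℝ → ℝ}
    (hmul : ∀ x y : ℝ, 0 ≤ x → 0 ≤ y → g (x * y) = g x * g y) (hghalf : g (1 / 2) ≠ 0)
    {δ : ℝ} {p : Fin d → ℝ} (hp : IsProbVec p) (hdist : |δ| ≤ l1Dist p (unif d)) :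
    (ConvexOn ℝ (Set.Ici 0) g →
      2 * (d * g (1 / d) / (2 * g (1 / 2)) *
          (g ((1 + δ / 2) / 2) + g ((1 - δ / 2) / 2) - 2 * g (1 / 2))) ≤
        ∑ i, g (p i) - d * g (1 / d)) ∧
    (ConcaveOn ℝ (Set.Ici 0) g →
      2 * (d * g (1 / d) / (2 * g (1 / 2)) *
          (2 * g (1 / 2) - (g ((1 + δ / 2) / 2) + g ((1 - δ / 2) / 2)))) ≤
        d * g (1 / d) - ∑ i, g (p i)) := by
  obtain ⟨hδ₁, hδ₂⟩ : -2 ≤ δ ∧ δ ≤ 2 :=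
    abs_le.mp (hdist.trans (hp.l1Dist_le_two (isProbVec_unif hp.dim_ne_zero)))
  have hrescale {a : ℝ} (ha : 0 ≤ a) : g (a / d) = g (1 / d) / g (1 / 2) * g (a / 2) :=
    map_div_eq_map_one_div_div_mul hmul ha d.cast_nonneg zero_le_two hghalf
  have hdiff : d * (g ((1 + δ / 2) / d) + g ((1 - δ / 2) / d) - 2 * g (1 / d)) =
      2 * (d * g (1 / d) / (2 * g (1 / 2)) *
        (g ((1 + δ / 2) / 2) + g ((1 - δ / 2) / 2) - 2 * g (1 / 2))) := by
    rw [hrescale (by linarith : 0 ≤ 1 + δ / 2), hrescale (by linarith : 0 ≤ 1 - δ / 2)]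
    field_simp
  refine ⟨fun hg ↦ ?_, fun hg ↦ ?_⟩
  · exact hdiff ▸ hp.le_sum_sub_of_convexOn hg hdist
  · linarith [hp.le_sub_sum_of_concaveOn hg hdist]

/-- Reduction to binary distributions for multiplicative convex/concave functions. -/
theorem binary_reduction_multiplicative (d : ℕ) (hd : 2 ≤ d) (g : ℝ → ℝ)
    (hnn : ∀ x : ℝ, 0 ≤ x → 0 ≤ g x)
    (hmul : ∀ x y : ℝ, 0 ≤ x → 0 ≤ y → g (x * y) = g x * g y)
    (hg1 : g 1 = 1) (hghalf : 0 < g (1 / 2))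
    (δ : ℝ) (hδ0 : 0 ≤ δ) (hδ2 : δ ≤ 2)
    (p : Fin d → ℝ) (hp : IsProbVec p) (hdist : δ ≤ l1Dist p (unif d)) :
    (ConvexOn ℝ (Set.Ici 0) g →
      ((d : ℝ) * g (1 / d) / (2 * g (1 / 2))) *
          ((g ((1 + δ / 2) / 2) + g ((1 - δ / 2) / 2)) - 2 * g (1 / 2)) ≤
        (∑ i, g (p i)) - (d : ℝ) * g (1 / d)) ∧
    (ConcaveOn ℝ (Set.Ici 0) g →
      ((d : ℝ) * g (1 / d) / (2 * g (1 / 2))) *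
          (2 * g (1 / 2) - (g ((1 + δ / 2) / 2) + g ((1 - δ / 2) / 2))) ≤
        (d : ℝ) * g (1 / d) - ∑ i, g (p i)) := by
  obtain ⟨hconvex, hconcave⟩ :=
    binary_reduction_multiplicative_general hmul hghalf.ne' hp ((abs_of_nonneg hδ0).trans_le hdist)
  have hcoeff : 0 ≤ d * g (1 / d) / (2 * g (1 / 2)) :=
    div_nonneg (mul_nonneg d.cast_nonneg (hnn _ (by positivity))) (by positivity)
  have hr : |δ / 2| ≤ 1 := abs_le.mpr ⟨by linarith, by linarith⟩
  exact ⟨fun hg ↦ by linarith [hconvex hg, mul_nonneg hcoeff (sub_nonneg.mpr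
      (convexOn_two_mul_map_one_div_le hg hr zero_le_two))],
    fun hg ↦ by linarith [hconcave hg, mul_nonneg hcoeff (sub_nonneg.mpr
      (concaveOn_le_two_mul_map_one_div hg hr zero_le_two))]⟩
end

section
/- From approximate to strict Tsallis-entropy inequalities (Proposition, part (ii)): Let d ≥ 2, let p, q ∈ ℝ^d be probability vectors, let α > 0 and η_α > 0 satisfy T_α(p) ≤ T_α(q) + η_α. Define ε_T(α) := (16·η_α·d^{α−1})^{1/3} if α ≥ 1 and ε_T(α) := (16·η_α·d^{α−1}·α^{−1})^{1/3} if 0 < α < 1, and assume ε_T(α) ≤ 1/2. Then T_α(p) ≤ T_α(q̃(ε_T(α))) − min{ η_α, T_α(u_d) − T_α(p) }. -/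
/-!
Write `T_α(p) = -∑ᵢ pᵢ ln_α pᵢ` with the deformed logarithm `ln_α x = (x^(α-1) - 1)/(α-1)`. The
inequality `1 - 1/x ≤ ln_α x` and the identity `ln_α (xy) = ln_α x + x^(α-1) ln_α y` give, without
calculus, the tangent-line inequality for `x ↦ x ln_α x`, whose slope at `z` is `1 + α ln_α z`.
Applied at `zᵢ = (1-ε)qᵢ + εu` with `u = 1/d`, it yields, because the `qᵢ - u` sum to zero,

  `T_α(z) - T_α(q) ≥ α ε d^(1-α) ∑ᵢ (qᵢ - u) ln_α(zᵢ/u)`.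

No summand is negative, and those with `qᵢ ≥ u` are at least `(qᵢ - u)²/(qᵢ + u)` when `ε ≤ 1/2`.
Since `∑ᵢ (qᵢ + u) = 2` and `∑ᵢ (qᵢ - u)⁺ = ‖q - u_d‖₁/2`, Cauchy–Schwarz bounds the sum below by
`‖q - u_d‖₁²/8`. For `‖q - u_d‖₁ ≥ ε` the gain `α ε³ d^(1-α)/8` is at least `2η`: one `η` pays for
the error in the hypothesis and the other is the strictness.
-/

/-- The deformed logarithm `ln_α`, indexed so that `T_α(p) = -∑ᵢ pᵢ ln_α pᵢ`: it is
`(x^(α-1) - 1)/(α-1)` for `α ≠ 1` and the natural logarithm for `α = 1`. -/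
noncomputable def tsallisLog (α x : ℝ) : ℝ :=
  if α = 1 then Real.log x else (x ^ (α - 1) - 1) / (α - 1)

section TsallisLog

variable {α x y z u ε : ℝ}

lemma tsallisLog_mul (hx : 0 < x) (hy : 0 < y) :
    tsallisLog α (x * y) = tsallisLog α x + x ^ (α - 1) * tsallisLog α y := by
  unfold tsallisLog
  split_ifs with h
  · rw [Real.log_mul hx.ne' hy.ne', h, sub_self, Real.rpow_zero, one_mul]
  · rw [Real.mul_rpow hx.le hy.le]
    ring

lemma rpow_sub_one_eq_one_add_mul_tsallisLog (α x : ℝ) :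
    x ^ (α - 1) = 1 + (α - 1) * tsallisLog α x := by
  unfold tsallisLog
  split_ifs with h
  · simp [h]
  · rw [mul_div_cancel₀ _ (sub_ne_zero.2 h)]
    ring

lemma mul_tsallisLog_of_ne_one (hα0 : α ≠ 0) (hα1 : α ≠ 1) (hx : 0 ≤ x) :
    x * tsallisLog α x = (x ^ α - x) / (α - 1) := by
  have hpow : x * x ^ (α - 1) = x ^ α := by
    rw [← Real.rpow_one_add' hx (by simpa using hα0), add_sub_cancel]
  rw [tsallisLog, if_neg hα1, ← mul_div_assoc, mul_sub, hpow, mul_one]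

lemma sub_one_le_mul_tsallisLog (hα : 0 < α) (hx : 0 < x) : x - 1 ≤ x * tsallisLog α x := by
  rcases lt_trichotomy α 1 with h | rfl | h
  · have bernoulli := rpow_one_add_le_one_add_mul_self (s := x - 1) (by linarith) hα.le h.le
    rw [add_sub_cancel] at bernoulli
    rw [mul_tsallisLog_of_ne_one hα.ne' h.ne hx.le, le_div_iff_of_neg (by linarith)]
    linarith
  · simpa [tsallisLog, mul_sub, hx.ne'] using
      mul_le_mul_of_nonneg_left (Real.one_sub_inv_le_log_of_pos hx) hx.le
  · have bernoulli := one_add_mul_self_le_rpow_one_add (s := x - 1) (by linarith) h.le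
    rw [add_sub_cancel] at bernoulli
    rw [mul_tsallisLog_of_ne_one hα.ne' h.ne' hx.le, le_div_iff₀ (by linarith)]
    linarith

lemma one_sub_inv_le_tsallisLog (hα : 0 < α) (hx : 0 < x) : 1 - x⁻¹ ≤ tsallisLog α x := by
  refine le_of_mul_le_mul_left ?_ hx
  rw [mul_sub, mul_one, mul_inv_cancel₀ hx.ne']
  exact sub_one_le_mul_tsallisLog hα hx

lemma tsallisLog_nonpos (hx : 0 < x) (hx1 : x ≤ 1) : tsallisLog α x ≤ 0 := by
  rcases lt_trichotomy α 1 with h | rfl | h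
  · rw [tsallisLog, if_neg h.ne]
    exact div_nonpos_of_nonneg_of_nonpos
      (sub_nonneg.2 (Real.one_le_rpow_of_pos_of_le_one_of_nonpos hx hx1 (by linarith)))
      (by linarith)
  · simpa [tsallisLog] using Real.log_nonpos hx.le hx1
  · rw [tsallisLog, if_neg h.ne']
    exact div_nonpos_of_nonpos_of_nonneg
      (sub_nonpos.2 (Real.rpow_le_one hx.le hx1 (by linarith))) (by linarith)

lemma tangent_le_mul_tsallisLog (hα : 0 < α) (hz : 0 < z) (hy : 0 ≤ y) :
    z * tsallisLog α z + (1 + α * tsallisLog α z) * (y - z) ≤ y * tsallisLog α y := by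
  calc z * tsallisLog α z + (1 + α * tsallisLog α z) * (y - z)
      = y * tsallisLog α z + z ^ (α - 1) * (y - z) := by
        rw [rpow_sub_one_eq_one_add_mul_tsallisLog]
        ring
    _ ≤ y * tsallisLog α y := by
        rcases hy.eq_or_lt with rfl | hy
        · have : 0 ≤ z ^ (α - 1) * z := by positivity
          linarith
        · have hratio : y - z ≤ y * tsallisLog α (y / z) := by
            have h := mul_le_mul_of_nonneg_left (sub_one_le_mul_tsallisLog hα (div_pos hy hz)) hz.le
            rwa [mul_sub, ← mul_assoc, mul_div_cancel₀ _ hz.ne', mul_one] at h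
          have hsplit : tsallisLog α y = tsallisLog α z + z ^ (α - 1) * tsallisLog α (y / z) := by
            rw [← tsallisLog_mul hz (div_pos hy hz), mul_div_cancel₀ _ hz.ne']
          have := mul_le_mul_of_nonneg_left hratio (Real.rpow_nonneg hz.le (α - 1))
          rw [hsplit]
          linarith

lemma posPart_sq_div_le_sub_mul_tsallisLog (hα : 0 < α) (hu : 0 < u) (hε : 0 < ε)
    (hε2 : ε ≤ 1 / 2) (hx : 0 ≤ x) :
    (x - u)⁺ ^ 2 / (x + u) ≤ (x - u) * tsallisLog α (((1 - ε) * x + ε * u) / u) := by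
  have hz : 0 < (1 - ε) * x + ε * u :=
    add_pos_of_nonneg_of_pos (mul_nonneg (by linarith) hx) (mul_pos hε hu)
  rcases le_total x u with hxu | hxu
  · have hz1 : ((1 - ε) * x + ε * u) / u ≤ 1 := by
      rw [div_le_one hu]
      nlinarith
    rw [posPart_of_nonpos (sub_nonpos.2 hxu), zero_pow two_ne_zero, zero_div]
    exact mul_nonneg_of_nonpos_of_nonpos (sub_nonpos.2 hxu) (tsallisLog_nonpos (div_pos hz hu) hz1)
  · have hxu0 : 0 ≤ x - u := sub_nonneg.2 hxu
    have hlog : (x - u) / (x + u) ≤ tsallisLog α (((1 - ε) * x + ε * u) / u) :=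
      calc (x - u) / (x + u)
          ≤ (1 - ε) * (x - u) / ((1 - ε) * x + ε * u) := by
            rw [div_le_div_iff₀ (by linarith) hz]
            have : 0 ≤ (x - u) * ((1 - 2 * ε) * u) :=
              mul_nonneg hxu0 (mul_nonneg (by linarith) hu.le)
            linarith
        _ = 1 - (((1 - ε) * x + ε * u) / u)⁻¹ := by
            rw [inv_div, one_sub_div hz.ne']
            ring
        _ ≤ _ := one_sub_inv_le_tsallisLog hα (div_pos hz hu)
    rw [posPart_of_nonneg hxu0, sq, mul_div_assoc]
    exact mul_le_mul_of_nonneg_left hlog hxu0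

lemma mul_tsallisLog_mix_gain (hα : 0 < α) (hu : 0 < u) (hε : 0 < ε) (hε2 : ε ≤ 1 / 2)
    (hx : 0 ≤ x) :
    ε * (1 + α * tsallisLog α u) * (x - u) + α * ε * u ^ (α - 1) * ((x - u)⁺ ^ 2 / (x + u)) ≤
      x * tsallisLog α x - ((1 - ε) * x + ε * u) * tsallisLog α ((1 - ε) * x + ε * u) := by
  set z := (1 - ε) * x + ε * u with hz_def
  have hz : 0 < z :=
    add_pos_of_nonneg_of_pos (mul_nonneg (by linarith) hx) (mul_pos hε hu)
  have hlog : tsallisLog α z = tsallisLog α u + u ^ (α - 1) * tsallisLog α (z / u) := by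
    rw [← tsallisLog_mul hu (div_pos hz hu), mul_div_cancel₀ _ hu.ne']
  calc _ ≤ ε * (1 + α * tsallisLog α u) * (x - u)
          + α * ε * u ^ (α - 1) * ((x - u) * tsallisLog α (z / u)) := by
        gcongr
        exact posPart_sq_div_le_sub_mul_tsallisLog hα hu hε hε2 hx
    _ = (1 + α * tsallisLog α z) * (x - z) := by
        rw [hlog, hz_def]
        ring
    _ ≤ _ := by linarith [tangent_le_mul_tsallisLog hα hz hx]

end TsallisLog

lemma tsallisEntropy_eq_neg_sum_mul_tsallisLog {α : ℝ} (hα0 : α ≠ 0) {d : ℕ}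
    {p : Fin d → ℝ} (hp : IsProbVec p) : tsallisEntropy α p = -∑ i, p i * tsallisLog α (p i) := by
  rcases eq_or_ne α 1 with rfl | h
  · simp only [tsallisEntropy, shannonEntropy, tsallisLog, if_true]
  · simp only [tsallisEntropy, if_neg h, mul_tsallisLog_of_ne_one hα0 h (hp.1 _)]
    rw [← Finset.sum_div, Finset.sum_sub_distrib, hp.2]
    ring

lemma sum_abs_eq_two_mul_sum_posPart {ι : Type*} {s : Finset ι} {f : ι → ℝ}
    (hf : ∑ i ∈ s, f i = 0) : ∑ i ∈ s, |f i| = 2 * ∑ i ∈ s, (f i)⁺ := by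
  rw [← add_zero (∑ i ∈ s, |f i|), ← hf, ← Finset.sum_add_distrib, Finset.mul_sum]
  refine Finset.sum_congr rfl fun i _ ↦ ?_
  rw [abs_add_eq_two_nsmul_posPart, nsmul_eq_mul, Nat.cast_ofNat]

section UniformMixture

variable {d : ℕ} {q : Fin d → ℝ} {α ε : ℝ}

lemma IsProbVec.dim_pos (hq : IsProbVec q) : 0 < d := by
  rcases Nat.eq_zero_or_pos d with rfl | hd
  · simpa using hq.2
  · exact hd

lemma sum_unif (hd : 0 < d) : ∑ i, unif d i = 1 := by
  simp [unif, hd.ne']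

lemma IsProbVec.sum_sub_unif (hq : IsProbVec q) : ∑ i, (q i - unif d i) = 0 := by
  rw [Finset.sum_sub_distrib, hq.2, sum_unif hq.dim_pos, sub_self]

lemma IsProbVec.mix_unif (hq : IsProbVec q) (hε0 : 0 ≤ ε) (hε1 : ε ≤ 1) :
    IsProbVec fun i ↦ (1 - ε) * q i + ε * unif d i := by
  refine ⟨fun i ↦ ?_, ?_⟩
  · have hu : 0 ≤ unif d i := by
      unfold unif
      positivity
    exact add_nonneg (mul_nonneg (sub_nonneg.2 hε1) (hq.1 i)) (mul_nonneg hε0 hu)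
  · rw [Finset.sum_add_distrib, ← Finset.mul_sum, ← Finset.mul_sum, hq.2, sum_unif hq.dim_pos]
    ring

lemma IsProbVec.l1Dist_unif_sq_div_eight_le_sum (hq : IsProbVec q) :
    l1Dist q (unif d) ^ 2 / 8 ≤ ∑ i, (q i - unif d i)⁺ ^ 2 / (q i + unif d i) := by
  have hdist : l1Dist q (unif d) = 2 * ∑ i, (q i - unif d i)⁺ :=
    sum_abs_eq_two_mul_sum_posPart hq.sum_sub_unif
  have hmass : ∑ i, (q i + unif d i) = 2 := by
    rw [Finset.sum_add_distrib, hq.2, sum_unif hq.dim_pos]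
    norm_num
  have hpos : ∀ i ∈ Finset.univ, 0 < q i + unif d i := fun i _ ↦
    add_pos_of_nonneg_of_pos (hq.1 i) (one_div_pos.2 (Nat.cast_pos.2 hq.dim_pos))
  calc l1Dist q (unif d) ^ 2 / 8
      = (∑ i, (q i - unif d i)⁺) ^ 2 / ∑ i, (q i + unif d i) := by
        rw [hdist, hmass]
        ring
    _ ≤ _ := Finset.sq_sum_div_le_sum_sq_div Finset.univ _ hpos

theorem tsallisEntropy_add_le_mix_unif (hq : IsProbVec q) (hα : 0 < α) (hε : 0 < ε)
    (hε2 : ε ≤ 1 / 2) :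
    tsallisEntropy α q + α * ε * l1Dist q (unif d) ^ 2 / (8 * (d : ℝ) ^ (α - 1)) ≤
      tsallisEntropy α fun i ↦ (1 - ε) * q i + ε * unif d i := by
  have hu : (0 : ℝ) < 1 / d := one_div_pos.2 (Nat.cast_pos.2 hq.dim_pos)
  have hcenter : ∑ i, (q i - 1 / d) = 0 := hq.sum_sub_unif
  have hgain := Finset.sum_le_sum fun i (_ : i ∈ Finset.univ) ↦
    mul_tsallisLog_mix_gain hα hu hε hε2 (hq.1 i)
  rw [Finset.sum_add_distrib, ← Finset.mul_sum, hcenter, mul_zero, zero_add, ← Finset.mul_sum,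
    Finset.sum_sub_distrib] at hgain
  have hl1 : α * ε * l1Dist q (unif d) ^ 2 / (8 * (d : ℝ) ^ (α - 1)) ≤
      α * ε * (1 / d : ℝ) ^ (α - 1) * ∑ i, (q i - 1 / d)⁺ ^ 2 / (q i + 1 / d) :=
    calc _ = α * ε * (1 / d : ℝ) ^ (α - 1) * (l1Dist q (unif d) ^ 2 / 8) := by
          rw [one_div, Real.inv_rpow d.cast_nonneg]
          ring
      _ ≤ _ := mul_le_mul_of_nonneg_left hq.l1Dist_unif_sq_div_eight_le_sum (by positivity)
  rw [tsallisEntropy_eq_neg_sum_mul_tsallisLog hα.ne' hq,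
    tsallisEntropy_eq_neg_sum_mul_tsallisLog hα.ne' (hq.mix_unif hε.le (by linarith))]
  simp only [unif] at hl1 ⊢
  linarith

lemma smoothed_of_lt (h : l1Dist q (unif d) < ε) : smoothed q ε = unif d :=
  if_pos h

lemma smoothed_of_le (h : ε ≤ l1Dist q (unif d)) :
    smoothed q ε = fun i ↦ (1 - ε) * q i + ε * unif d i :=
  if_neg h.not_gt

theorem approx_to_strict_tsallis_general (hq : IsProbVec q) (hα : 0 < α) (hε : 0 < ε)
    (hε2 : ε ≤ 1 / 2) {η t : ℝ} (hη : 16 * η * (d : ℝ) ^ (α - 1) ≤ α * ε ^ 3)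
    (ht : t ≤ tsallisEntropy α q + η) :
    t ≤ tsallisEntropy α (smoothed q ε) - min η (tsallisEntropy α (unif d) - t) := by
  have hd : (0 : ℝ) < d := Nat.cast_pos.2 hq.dim_pos
  rcases lt_or_ge (l1Dist q (unif d)) ε with hnear | hfar
  · rw [smoothed_of_lt hnear]
    linarith [min_le_right η (tsallisEntropy α (unif d) - t)]
  · have hgain : 2 * η ≤ α * ε * l1Dist q (unif d) ^ 2 / (8 * (d : ℝ) ^ (α - 1)) :=
      calc 2 * η ≤ α * ε * ε ^ 2 / (8 * (d : ℝ) ^ (α - 1)) := by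
            rw [le_div_iff₀ (by positivity)]
            linarith
        _ ≤ _ := by gcongr
    rw [smoothed_of_le hfar]
    linarith [min_le_left η (tsallisEntropy α (unif d) - t),
      tsallisEntropy_add_le_mix_unif hq hα hε hε2]

end UniformMixture

/-- The smoothing parameter `ε_T(α)` as a function of `A = 16 η_α d^(α-1)`. -/
noncomputable def smoothingParam (α A : ℝ) : ℝ :=
  if 1 ≤ α then A ^ ((1 : ℝ) / 3) else (A * α⁻¹) ^ ((1 : ℝ) / 3)

section SmoothingParam

variable {α A : ℝ}

lemma smoothingParam_pos (hα : 0 < α) (hA : 0 < A) : 0 < smoothingParam α A := by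
  unfold smoothingParam
  split_ifs <;> positivity

lemma le_mul_smoothingParam_cube (hα : 0 < α) (hA : 0 ≤ A) : A ≤ α * smoothingParam α A ^ 3 := by
  have cube_cbrt {x : ℝ} (hx : 0 ≤ x) : (x ^ ((1 : ℝ) / 3)) ^ 3 = x := by
    simpa using Real.rpow_inv_natCast_pow hx three_ne_zero
  unfold smoothingParam
  split_ifs with h
  · rw [cube_cbrt hA]
    exact le_mul_of_one_le_left hA h
  · rw [cube_cbrt (by positivity), mul_comm A, mul_inv_cancel_left₀ hα.ne']

end SmoothingParam

/-- From approximate to strict Tsallis-entropy inequalities: if `T_α(p) ≤ T_α(q) + η_α` then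
`T_α(p) ≤ T_α(q̃(ε_T(α))) − min{η_α, T_α(u_d) − T_α(p)}`, where
`ε_T(α) = (16 η_α d^{α−1})^{1/3}` for `α ≥ 1` and `(16 η_α d^{α−1} α^{−1})^{1/3}` for
`0 < α < 1`, assuming `ε_T(α) ≤ 1/2`. -/
theorem approx_to_strict_tsallis (d : ℕ) (hd : 2 ≤ d)
    (p q : Fin d → ℝ) (hp : IsProbVec p) (hq : IsProbVec q)
    (α : ℝ) (hα : 0 < α) (ηα : ℝ) (hηα : 0 < ηα)
    (hT : tsallisEntropy α p ≤ tsallisEntropy α q + ηα)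
    (εT : ℝ)
    (hεT : εT = if 1 ≤ α then (16 * ηα * (d : ℝ) ^ (α - 1)) ^ ((1 : ℝ) / 3)
      else (16 * ηα * (d : ℝ) ^ (α - 1) * α⁻¹) ^ ((1 : ℝ) / 3))
    (hεT12 : εT ≤ 1 / 2) :
    tsallisEntropy α p ≤ tsallisEntropy α (smoothed q εT) -
      min ηα (tsallisEntropy α (unif d) - tsallisEntropy α p) := by
  have hA : 0 < 16 * ηα * (d : ℝ) ^ (α - 1) :=
    mul_pos (by linarith) (Real.rpow_pos_of_pos (Nat.cast_pos.2 hq.dim_pos) _)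
  obtain rfl : εT = smoothingParam α (16 * ηα * (d : ℝ) ^ (α - 1)) := hεT
  exact approx_to_strict_tsallis_general hq hα (smoothingParam_pos hα hA) hεT12
    (le_mul_smoothingParam_cube hα hA.le) hT
end
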